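/- Let N ≥ 1 be an integer, η ∈ ℂ∖{0}, and suppose ξ_1,…,ξ_N ∈ ℂ satisfy the genericity condition (G). Let ζ₊, ζ₋ ∈ ℂ with ξ_n ≠ ζ₊ and ξ_n ≠ ζ₋ for all n, set s := (ζ₊+ζ₋)/η, and assume neither s nor s + N − n_α − n_β is a nonpositive integer. Let α(λ) = ∏_{k=1}^{n_α}(λ² − α_k²) and β(λ) = ∏_{k=1}^{n_β}(λ² − β_k²), where all α_k, β_k are nonzero, the n_α + n_β squares α_1²,…,α_{n_α}², β_1²,…,β_{n_β}² are pairwise distinct, and none of them equals any (ξ_n^{(h)})². Then det_{1≤i,j≤N}[ α(ξ_i^{(0)})β(ξ_i^{(0)})(ξ_i^{(0)})^{2(j−1)} + f_i g_i α(ξ_i^{(1)})β(ξ_i^{(1)})(ξ_i^{(1)})^{2(j−1)} ] = V̂(ξ_1,…,ξ_N) · (V̂(ξ_1^{(0)},…,ξ_N^{(0)})/V̂(ξ_1^{(1)},…,ξ_N^{(1)})) · ∏_{n=1}^N [ξ_n/((ξ_n−ζ₋)(ζ₊−ξ_n))] · (2η)^{N−n_α−n_β} · (Γ(s+N−n_α−n_β)/Γ(s))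 · A_{{α}∪{β}}[Ã_{ζ₊,ζ₋}], where A_{{α}∪{β}} is taken over the n_α+n_β points α_1,…,α_{n_α},β_1,…,β_{n_β} and Γ is the complex Gamma function. -/

import Mathlib

open Finset

/-- Bulk function `a(λ) = ∏ (λ - ξ_n + η/2)`. -/
noncomputable def aF (N : ℕ) (η : ℂ) (ξ : Fin N → ℂ) (lam : ℂ) : ℂ :=
  ∏ n, (lam - ξ n + η / 2)

/-- Bulk function `d(λ) = ∏ (λ - ξ_n - η/2)`. -/
noncomputable def dF (N : ℕ) (η : ℂ) (ξ : Fin N → ℂ) (lam : ℂ) : ℂ :=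
  ∏ n, (lam - ξ n - η / 2)

/-- Genericity condition (G) on the inhomogeneity parameters. -/
def GenG (N : ℕ) (η : ℂ) (ξ : Fin N → ℂ) : Prop :=
  (∀ j, ξ j ≠ 0 ∧ ξ j ≠ η ∧ ξ j ≠ -η) ∧
  ∀ j k, j ≠ k →
    ξ j + ξ k ≠ 0 ∧ ξ j + ξ k ≠ η ∧ ξ j + ξ k ≠ -η ∧
    ξ j - ξ k ≠ 0 ∧ ξ j - ξ k ≠ η ∧ ξ j - ξ k ≠ -η

/-- `V̂(u_1,…,u_L) = ∏_{j<k}(u_k² − u_j²)`. -/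
noncomputable def Vhat {L : ℕ} (u : Fin L → ℂ) : ℂ :=
  ∏ j, ∏ k ∈ Finset.Ioi j, (u k ^ 2 - u j ^ 2)

/-- `f_n = −∏_{a≠n} ((ξ_n−ξ_a+η)(ξ_n+ξ_a+η))/((ξ_n−ξ_a−η)(ξ_n+ξ_a−η))`. -/
noncomputable def fC (N : ℕ) (η : ℂ) (ξ : Fin N → ℂ) (n : Fin N) : ℂ :=
  -∏ a ∈ Finset.univ.erase n,
      ((ξ n - ξ a + η) * (ξ n + ξ a + η)) / ((ξ n - ξ a - η) * (ξ n + ξ a - η))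

/-- `g_n = ((ξ_n+ζ₊)(ξ_n+ζ₋))/((ξ_n−ζ₊)(ξ_n−ζ₋))`. -/
noncomputable def gC (N : ℕ) (ζp ζm : ℂ) (ξ : Fin N → ℂ) (n : Fin N) : ℂ :=
  ((ξ n + ζp) * (ξ n + ζm)) / ((ξ n - ζp) * (ξ n - ζm))

/-- `A_{{x}}[f]` as a ratio of determinants. -/
noncomputable def Afun {L : ℕ} (η : ℂ) (x : Fin L → ℂ) (f : ℂ → ℂ) : ℂ :=
  Matrix.det (Matrix.of fun i j : Fin L =>
      f (x i) * (x i + η / 2) ^ (2 * (j : ℕ)) + f (-x i) * (x i - η / 2) ^ (2 * (j : ℕ)))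
    / Matrix.det (Matrix.of fun i j : Fin L => x i ^ (2 * (j : ℕ)))

/-- `Ã_{ζ,ζ'}(μ) = ((−μ−η/2+ζ)(−μ−η/2+ζ')/(−μ)) a(−μ) d(μ)`. -/
noncomputable def Atil (N : ℕ) (η : ℂ) (ξ : Fin N → ℂ) (ζ ζ' μ : ℂ) : ℂ :=
  ((-μ - η / 2 + ζ) * (-μ - η / 2 + ζ') / (-μ)) * aF N η ξ (-μ) * dF N η ξ μ

/-!
In the variable `X = λ²`, the `i`-th row of the matrix is a linear functional `ℓ_i` applied to
`P X^j`, where `P = ∏ (X - x_k²)` and the `x_k` are the `M` points `α_k, β_k`. The difference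
operator built from `Ã` sends `λ^{2m}` to a polynomial `S_m(λ²)` of degree at most `N + m` whose
coefficient of that degree is proportional to `η (s + N - 1 - m)`, and the coefficients `f_i g_i`
are exactly those for which `ℓ_i(S_m) = 0` for all `m`.

Consider the determinant of the evaluations at the `x_k²` together with the `ℓ_i` on the monomials
of degree less than `M + N`. The family `X^j, P X^j` makes it block triangular because `P` vanishes
at the `x_k²`, the family `X^j, S_m` because the `ℓ_i` annihilate `S_m`. Comparing the two expresses
`det ℓ_i(P X^j)` as `det ℓ_i(X^j)` times `det S_m(x_k²)`, that is `A_{x}[Ã]`, the coefficients of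
the `S_m` giving the Gamma quotient. For `M = N` and `x_k = ξ_k^{(1)}` both other determinants are
explicit products, which evaluates the normalisation `det ℓ_i(X^j)`.
-/

section LinearFunctionals

open Polynomial

lemma val_finRotate_pow {n : ℕ} (k : ℕ) (i : Fin n) :
    ((finRotate n ^ k) i : ℕ) = (i + k) % n := by
  have := i.neZero
  induction k with
  | zero => simp [Nat.mod_eq_of_lt i.isLt]
  | succ k ih =>
    rw [pow_succ', Equiv.Perm.mul_apply, finRotate_apply, Fin.val_add, ih, Fin.val_one',
      ← Nat.add_mod, add_assoc]

lemma finAddFlip_trans_finCongr_eq_finRotate_pow (m n : ℕ) :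
    finAddFlip.trans (finCongr (add_comm n m)) = finRotate (m + n) ^ n := by
  ext i
  rw [val_finRotate_pow]
  refine Fin.addCases (fun j => ?_) (fun j => ?_) i
  · have : n + (j : ℕ) < m + n := by lia
    simp [add_comm, Nat.mod_eq_of_lt this]
  · have : (m + j + n : ℕ) = (m + n) + j := by ring
    simp [this, Nat.mod_eq_of_lt (show (j : ℕ) < m + n by lia)]

lemma sign_finAddFlip_trans_finCongr (m n : ℕ) :
    Equiv.Perm.sign (finAddFlip.trans (finCongr (add_comm n m))) = (-1) ^ (m * n) := by
  have hparity : (m + n - 1) * n = m * n + n * (n - 1) := by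
    rcases n with _ | n
    · simp
    · simp only [Nat.add_sub_cancel, ← add_assoc]; ring
  rw [finAddFlip_trans_finCongr_eq_finRotate_pow, map_pow, sign_finRotate, ← pow_mul, hparity,
    pow_add, (Nat.even_mul_pred_self n).neg_one_pow, mul_one]

variable {R : Type*} [CommRing R] {M N : ℕ}

lemma det_append_comm {E : Type*} (f : E → ℕ → R) (u : Fin M → E) (v : Fin N → E) :
    (Matrix.of fun i j : Fin (M + N) => f (Fin.append u v i) j).det
      = (-1) ^ (M * N) * (Matrix.of fun i j : Fin (N + M) => f (Fin.append v u i) j).det := by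
  have hperm : (Matrix.of fun i j : Fin (M + N) => f (Fin.append u v i) j)
      = ((Matrix.of fun i j : Fin (N + M) => f (Fin.append v u i) j).submatrix
          (finCongr (add_comm M N)) (finCongr (add_comm M N))).submatrix
            (finAddFlip.trans (finCongr (add_comm N M))) id := by
    ext i j
    refine Fin.addCases (fun k => ?_) (fun k => ?_) i <;> simp
  rw [hperm, Matrix.det_permute, Matrix.det_submatrix_equiv_self,
    sign_finAddFlip_trans_finCongr]
  simp

lemma linearMap_apply_eq_sum_coeff (φ : R[X] →ₗ[R] R) {n : ℕ} {p : R[X]}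
    (hp : p.natDegree < n) : φ p = ∑ k : Fin n, φ (X ^ (k : ℕ)) * p.coeff k := by
  conv_lhs => rw [p.as_sum_range' n hp, map_sum, sum_range]
  refine sum_congr rfl fun k _ => ?_
  rw [← C_mul_X_pow_eq_monomial, ← smul_eq_C_mul, map_smul, smul_eq_mul, mul_comm]

lemma det_linearMap_eq_det_linearMap_X_pow_mul {n : ℕ} (φ : Fin n → R[X] →ₗ[R] R)
    (p : Fin n → R[X]) (hp : ∀ j, (p j).natDegree ≤ j) :
    (Matrix.of fun i j => φ i (p j)).det
      = (Matrix.of fun i j : Fin n => φ i (X ^ (j : ℕ))).det * ∏ j : Fin n, (p j).coeff j := by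
  have hmul : (Matrix.of fun i j => φ i (p j))
      = (Matrix.of fun i j : Fin n => φ i (X ^ (j : ℕ)))
        * Matrix.of fun i j : Fin n => (p j).coeff i := by
    ext i j
    exact linearMap_apply_eq_sum_coeff (φ i) ((hp j).trans_lt j.isLt)
  rw [hmul, Matrix.det_mul,
    Matrix.det_of_isUpperTriangular (Matrix.matrixOfPolynomials_blockTriangular p hp)]
  rfl

lemma det_append_linearMap_X_pow_mul (u : Fin M → R[X] →ₗ[R] R) (v : Fin N → R[X] →ₗ[R] R)
    (p : Fin N → R[X]) (hp : ∀ j, (p j).natDegree ≤ M + j) (hup : ∀ i j, u i (p j) = 0) :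
    (Matrix.of fun i j : Fin (M + N) => Fin.append u v i (X ^ (j : ℕ))).det
        * ∏ j : Fin N, (p j).coeff (M + j)
      = (Matrix.of fun i j : Fin M => u i (X ^ (j : ℕ))).det
        * (Matrix.of fun i j => v i (p j)).det := by
  set q : Fin (M + N) → R[X] := Fin.append (fun j : Fin M => X ^ (j : ℕ)) p with hq
  have hdeg : ∀ j, (q j).natDegree ≤ j := by
    refine Fin.addCases (fun j => ?_) (fun j => ?_)
    · simpa [hq] using natDegree_X_pow_le (j : ℕ)
    · simpa [hq] using hp j
  have hcoeff : ∏ j : Fin (M + N), (q j).coeff j = ∏ j : Fin N, (p j).coeff (M + j) := by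
    simp [hq, Fin.prod_univ_add]
  have hblock : (Matrix.of fun i j => Fin.append u v i (q j)).submatrix
        finSumFinEquiv finSumFinEquiv
      = Matrix.fromBlocks (Matrix.of fun i j : Fin M => u i (X ^ (j : ℕ))) 0
          (Matrix.of fun i (j : Fin M) => v i (X ^ (j : ℕ))) (Matrix.of fun i j => v i (p j)) := by
    ext (i | i) (j | j) <;> simp [hq, hup]
  rw [← hcoeff, ← det_linearMap_eq_det_linearMap_X_pow_mul _ q hdeg,
    ← Matrix.det_submatrix_equiv_self finSumFinEquiv, hblock, Matrix.det_fromBlocks_zero₁₂]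

-- Both sides compute the determinant of all `M + N` functionals on the monomials, in two bases.
lemma det_mul_det_of_annihilating (u : Fin M → R[X] →ₗ[R] R) (v : Fin N → R[X] →ₗ[R] R)
    (p : Fin N → R[X]) (hp : ∀ j, (p j).natDegree ≤ M + j) (hup : ∀ i j, u i (p j) = 0)
    (q : Fin M → R[X]) (hq : ∀ j, (q j).natDegree ≤ N + j) (hvq : ∀ i j, v i (q j) = 0) :
    (Matrix.of fun i j : Fin M => u i (X ^ (j : ℕ))).det
        * (Matrix.of fun i j => v i (p j)).det * ∏ j : Fin M, (q j).coeff (N + j)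
      = (-1) ^ (M * N) * (Matrix.of fun i j => u i (q j)).det
        * (Matrix.of fun i j : Fin N => v i (X ^ (j : ℕ))).det
        * ∏ j : Fin N, (p j).coeff (M + j) := by
  have hcomm := det_append_comm (fun (φ : R[X] →ₗ[R] R) k => φ (X ^ k)) u v
  have hu := det_append_linearMap_X_pow_mul u v p hp hup
  have hv := det_append_linearMap_X_pow_mul v u q hq hvq
  rw [← hu, hcomm]
  linear_combination (-1) ^ (M * N) * (∏ j : Fin N, (p j).coeff (M + j)) * hv

end LinearFunctionals

section OddPart

open Polynomial

variable {R : Type*} [CommRing R]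

/-- The even part `E` of a polynomial, in the decomposition `F(t) = E(t²) + t O(t²)`. -/
noncomputable def evenPart (F : R[X]) : R[X] := contract 2 F

/-- The odd part `O` of a polynomial, in the decomposition `F(t) = E(t²) + t O(t²)`. -/
noncomputable def oddPart (F : R[X]) : R[X] := contract 2 (divX F)

lemma coeff_oddPart (F : R[X]) (n : ℕ) : (oddPart F).coeff n = F.coeff (2 * n + 1) := by
  rw [oddPart, coeff_contract two_ne_zero, coeff_divX, mul_comm]

lemma expand_evenPart_add_X_mul_expand_oddPart (F : R[X]) :
    expand R 2 (evenPart F) + X * expand R 2 (oddPart F) = F := by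
  ext n
  rcases Nat.even_or_odd' n with ⟨k, rfl | rfl⟩
  · have hodd : (X * expand R 2 (oddPart F)).coeff (2 * k) = 0 := by
      rcases k with _ | k
      · simp
      · rw [show 2 * (k + 1) = 2 * k + 1 + 1 by ring, coeff_X_mul, coeff_expand two_pos,
          if_neg (by lia)]
    rw [coeff_add, hodd, add_zero, coeff_expand_mul' two_pos, evenPart,
      coeff_contract two_ne_zero, mul_comm]
  · rw [coeff_add, coeff_expand two_pos, if_neg (by lia), zero_add, coeff_X_mul,
      coeff_expand_mul' two_pos, coeff_oddPart]

lemma eval_evenPart_add_mul_eval_oddPart (F : R[X]) (t : R) :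
    (evenPart F).eval (t ^ 2) + t * (oddPart F).eval (t ^ 2) = F.eval t := by
  conv_rhs => rw [← expand_evenPart_add_X_mul_expand_oddPart F]
  simp [expand_eval]

lemma eval_sub_eval_neg (F : R[X]) (t : R) :
    F.eval t - F.eval (-t) = 2 * t * (oddPart F).eval (t ^ 2) := by
  rw [← eval_evenPart_add_mul_eval_oddPart F t, ← eval_evenPart_add_mul_eval_oddPart F (-t),
    neg_sq]
  ring

lemma oddPart_comp_neg_X (F : R[X]) : oddPart (F.comp (-X)) = -oddPart F := by
  ext n
  rw [show (-X : R[X]) = C (-1) * X by simp, coeff_oddPart, comp_C_mul_X_coeff, coeff_neg,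
    coeff_oddPart, (odd_two_mul_add_one n).neg_one_pow, mul_neg_one]

lemma eval_oddPart_X_add_C_mul (F : R[X]) (a : R) :
    (oddPart ((X + C a) * F)).eval (a ^ 2) = F.eval a := by
  have hsplit : oddPart ((X + C a) * F) = evenPart F + C a * oddPart F := by
    ext n
    simp only [evenPart, coeff_oddPart, coeff_contract two_ne_zero, add_mul, coeff_add,
      coeff_X_mul, coeff_C_mul, mul_comm n 2]
  rw [hsplit, ← eval_evenPart_add_mul_eval_oddPart F a]
  simp

lemma natDegree_oddPart_le {F : R[X]} {d : ℕ} (hF : F.natDegree ≤ 2 * d + 2) :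
    (oddPart F).natDegree ≤ d := by
  rw [natDegree_le_iff_coeff_eq_zero]
  intro k hk
  rw [coeff_oddPart]
  exact coeff_eq_zero_of_natDegree_lt (by lia)

lemma coeff_oddPart_of_natDegree_eq {F : R[X]} {d : ℕ} (hF : F.natDegree = 2 * d + 2) :
    (oddPart F).coeff d = F.nextCoeff := by
  rw [coeff_oddPart, nextCoeff_of_natDegree_pos (by lia), hF]
  rfl

end OddPart

section Pochhammer

open Polynomial

lemma ascPochhammer_eval_ne_zero {R : Type*} [CommRing R] [IsDomain R] {s : R}
    (hs : ∀ m : ℕ, s ≠ -m) (n : ℕ) :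
    (ascPochhammer R n).eval s ≠ 0 := by
  rw [Ne, ascPochhammer_eval_eq_zero_iff]
  rintro ⟨m, -, hm⟩
  exact hs m (by rw [hm, neg_neg])

lemma Gamma_add_sub_div_Gamma {s : ℂ} (N M : ℕ) (hs : ∀ m : ℕ, s ≠ -m)
    (hs' : ∀ m : ℕ, s + N - M ≠ -m) :
    Complex.Gamma (s + N - M) / Complex.Gamma s
      = (ascPochhammer ℂ N).eval s / (ascPochhammer ℂ M).eval (s + N - M) := by
  have hN := Complex.Gamma_ne_zero hs'
  rw [← Complex.Gamma_add_nat_div_Gamma_eq s hs, ← Complex.Gamma_add_nat_div_Gamma_eq _ hs',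
    sub_add_cancel]
  have hsN : Complex.Gamma (s + N) ≠ 0 := Complex.Gamma_ne_zero fun m hm => hs (m + N) (by
    push_cast
    linear_combination hm)
  field_simp

end Pochhammer

section Vandermonde

lemma det_vandermonde_sq {L : ℕ} (u : Fin L → ℂ) :
    (Matrix.vandermonde fun i => u i ^ 2).det = Vhat u :=
  Matrix.det_vandermonde _

lemma Vhat_ne_zero {L : ℕ} {u : Fin L → ℂ} (hu : Function.Injective fun i => u i ^ 2) :
    Vhat u ≠ 0 := by
  rwa [← det_vandermonde_sq, Matrix.det_vandermonde_ne_zero_iff]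

-- For a pair `i ≠ k` both sides contribute
-- `-(ξ_i + ξ_k)² (ξ_i + ξ_k - η)² (ξ_i - ξ_k)² (ξ_i - ξ_k + η) (ξ_i - ξ_k - η)`.
lemma Vhat_sub_sq_mul_prod {N : ℕ} (η : ℂ) (ξ : Fin N → ℂ) :
    Vhat (fun n => ξ n - η / 2) ^ 2
        * ∏ i, ∏ k ∈ univ.erase i, ((ξ i - ξ k + η) * (ξ i + ξ k))
      = Vhat ξ ^ 2 * ∏ i, ∏ k ∈ univ.erase i, ((ξ i - ξ k - η) * (ξ i + ξ k - η)) := by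
  have hpairs (f : Fin N → Fin N → ℂ) :
      ∏ i, ∏ k ∈ univ.erase i, f k i = ∏ i, ∏ k ∈ Ioi i, f k i * f i k := by
    simp only [prod_prod_Ioi_mul_eq_prod_prod_off_diag, ← compl_singleton]
  rw [hpairs fun k i => (ξ i - ξ k + η) * (ξ i + ξ k),
    hpairs fun k i => (ξ i - ξ k - η) * (ξ i + ξ k - η)]
  simp only [Vhat, ← prod_pow, ← prod_mul_distrib]
  exact prod_congr rfl fun i _ => prod_congr rfl fun k _ => by ring

end Vandermonde

section DifferenceOperator

open Polynomial

variable {N : ℕ} (η : ℂ) (ξ : Fin N → ℂ) (ζ ζ' : ℂ)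

/-- The monic polynomial `(-1)^N λ Ã_{ζ,ζ'}(-λ)` in `λ`. -/
noncomputable def bulkPoly : ℂ[X] :=
  (X + C (ζ - η / 2)) * (X + C (ζ' - η / 2))
    * ∏ n, ((X + C (η / 2 - ξ n)) * (X + C (η / 2 + ξ n)))

lemma Atil_neg (t : ℂ) :
    Atil N η ξ ζ ζ' (-t) = (-1) ^ N * (bulkPoly η ξ ζ ζ').eval t / t := by
  have hbulk : aF N η ξ t * dF N η ξ (-t)
      = (-1) ^ N * ∏ n, ((t + (η / 2 - ξ n)) * (t + (η / 2 + ξ n))) := by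
    rw [← Fin.prod_const, aF, dF, ← prod_mul_distrib, ← prod_mul_distrib]
    exact prod_congr rfl fun n _ => by ring
  rw [Atil, neg_neg, mul_assoc, hbulk]
  simp only [bulkPoly, eval_mul, eval_prod, eval_add, eval_X, eval_C]
  ring

lemma bulkPoly_comp_neg_X : (bulkPoly η ξ ζ ζ').comp (-X) = bulkPoly (-η) ξ (-ζ) (-ζ') := by
  refine Polynomial.funext fun t => ?_
  simp only [bulkPoly, eval_comp, eval_mul, eval_prod, eval_add, eval_neg, eval_X, eval_C]
  congr 1
  · ring
  · exact prod_congr rfl fun n _ => by ring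

/-- The polynomial `S_m` in `λ²` such that `2 (-1)^N S_m(λ²)` is the image of `λ^{2m}` under the
difference operator `q ↦ Ã(λ) q(λ + η/2) + Ã(-λ) q(λ - η/2)`. -/
noncomputable def differencePoly (m : ℕ) : ℂ[X] :=
  oddPart (bulkPoly η ξ ζ ζ' * (X + C (-(η / 2))) ^ (2 * m))

lemma differencePoly_neg (m : ℕ) :
    differencePoly (-η) ξ (-ζ) (-ζ') m = -differencePoly η ξ ζ ζ' m := by
  have hpow : ((X + C (-(η / 2))) ^ (2 * m) : ℂ[X]).comp (-X)
      = (X + C (-(-η / 2))) ^ (2 * m) := by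
    refine Polynomial.funext fun t => ?_
    simp only [eval_comp, eval_pow, eval_add, eval_neg, eval_X, eval_C, pow_mul]
    ring
  rw [differencePoly, differencePoly, ← oddPart_comp_neg_X, mul_comp, bulkPoly_comp_neg_X, hpow]

lemma monic_bulk_factor (n : Fin N) :
    ((X + C (η / 2 - ξ n)) * (X + C (η / 2 + ξ n))).Monic :=
  (monic_X_add_C _).mul (monic_X_add_C _)

lemma monic_bulkPoly : (bulkPoly η ξ ζ ζ').Monic :=
  ((monic_X_add_C _).mul (monic_X_add_C _)).mul
    (monic_prod_of_monic _ _ fun n _ => monic_bulk_factor η ξ n)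

lemma natDegree_bulkPoly : (bulkPoly η ξ ζ ζ').natDegree = 2 * N + 2 := by
  rw [bulkPoly, ((monic_X_add_C _).mul (monic_X_add_C _)).natDegree_mul
      (monic_prod_of_monic _ _ fun n _ => monic_bulk_factor η ξ n),
    natDegree_prod_of_monic _ _ fun n _ => monic_bulk_factor η ξ n]
  simp only [(monic_X_add_C _).natDegree_mul (monic_X_add_C _), natDegree_X_add_C,
    sum_const, card_univ, Fintype.card_fin, smul_eq_mul]
  ring

lemma nextCoeff_bulkPoly : (bulkPoly η ξ ζ ζ').nextCoeff = ζ + ζ' - η + N * η := by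
  rw [bulkPoly, ((monic_X_add_C _).mul (monic_X_add_C _)).nextCoeff_mul
      (monic_prod_of_monic _ _ fun n _ => monic_bulk_factor η ξ n),
    Monic.nextCoeff_prod _ _ fun n _ => monic_bulk_factor η ξ n]
  simp only [(monic_X_add_C _).nextCoeff_mul (monic_X_add_C _), nextCoeff_X_add_C,
    sub_add_add_cancel, add_halves, sum_const, card_univ, Fintype.card_fin,
    nsmul_eq_mul]
  ring

lemma natDegree_bulkPoly_mul_pow (m : ℕ) :
    (bulkPoly η ξ ζ ζ' * (X + C (-(η / 2))) ^ (2 * m)).natDegree = 2 * (N + m) + 2 := by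
  rw [(monic_bulkPoly η ξ ζ ζ').natDegree_mul ((monic_X_add_C _).pow _), natDegree_bulkPoly,
    (monic_X_add_C _).natDegree_pow, natDegree_X_add_C]
  ring

lemma natDegree_differencePoly_le (m : ℕ) : (differencePoly η ξ ζ ζ' m).natDegree ≤ N + m :=
  natDegree_oddPart_le (natDegree_bulkPoly_mul_pow η ξ ζ ζ' m).le

lemma coeff_differencePoly (m : ℕ) :
    (differencePoly η ξ ζ ζ' m).coeff (N + m) = ζ + ζ' - η + N * η - m * η := by
  rw [differencePoly, coeff_oddPart_of_natDegree_eq (natDegree_bulkPoly_mul_pow η ξ ζ ζ' m),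
    (monic_bulkPoly η ξ ζ ζ').nextCoeff_mul ((monic_X_add_C _).pow _), nextCoeff_bulkPoly,
    (monic_X_add_C _).nextCoeff_pow, nextCoeff_X_add_C]
  simp only [nsmul_eq_mul, Nat.cast_mul, Nat.cast_ofNat]
  ring

lemma prod_coeff_differencePoly (hη : η ≠ 0) (M : ℕ) :
    ∏ m : Fin M, (differencePoly η ξ ζ ζ' m).coeff (N + m)
      = η ^ M * (ascPochhammer ℂ M).eval ((ζ + ζ') / η + N - M) := by
  have hfactor (m : Fin M) : (differencePoly η ξ ζ ζ' m).coeff (N + m)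
      = η * ((ζ + ζ') / η + N - 1 - (m : ℕ)) := by
    rw [coeff_differencePoly]
    field_simp
    ring
  rw [show (ζ + ζ') / η + N - M = ((ζ + ζ') / η + N - 1) - M + 1 by ring,
    ← descPochhammer_eval_eq_ascPochhammer, descPochhammer_eval_eq_prod_range,
    prod_range, ← Fin.prod_const, ← prod_mul_distrib]
  exact prod_congr rfl fun m _ => hfactor m

/-- The value of `S_m` at the node `(ξ_n + η/2)²`, up to the factor `ξ_n^{2m}`. The value at
`(ξ_n - η/2)²` is the same weight for `-η, -ζ, -ζ'`, up to sign. -/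
noncomputable def nodeWeight (n : Fin N) : ℂ :=
  η * ((ξ n + ζ) * (ξ n + ζ')) * ∏ a ∈ univ.erase n, ((ξ n - ξ a + η) * (ξ n + ξ a + η))

lemma eval_differencePoly_add (m : ℕ) (n : Fin N) :
    (differencePoly η ξ ζ ζ' m).eval ((ξ n + η / 2) ^ 2)
      = nodeWeight η ξ ζ ζ' n * (ξ n ^ 2) ^ m := by
  have hfactor : bulkPoly η ξ ζ ζ' * (X + C (-(η / 2))) ^ (2 * m) = (X + C (ξ n + η / 2))
      * ((X + C (ζ - η / 2)) * (X + C (ζ' - η / 2)) * ((X + C (η / 2 - ξ n))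
        * ∏ a ∈ univ.erase n, ((X + C (η / 2 - ξ a)) * (X + C (η / 2 + ξ a))))
        * (X + C (-(η / 2))) ^ (2 * m)) := by
    rw [bulkPoly, ← mul_prod_erase _ _ (mem_univ n), add_comm (ξ n)]
    ring
  have hnode (a : Fin N) : (ξ n + η / 2 + (η / 2 - ξ a)) * (ξ n + η / 2 + (η / 2 + ξ a))
      = (ξ n - ξ a + η) * (ξ n + ξ a + η) := by ring
  rw [differencePoly, hfactor, eval_oddPart_X_add_C_mul]
  simp only [eval_mul, eval_prod, eval_pow, eval_add, eval_X, eval_C, hnode, nodeWeight, pow_mul]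
  ring

lemma eval_differencePoly_sub (m : ℕ) (n : Fin N) :
    (differencePoly η ξ ζ ζ' m).eval ((ξ n - η / 2) ^ 2)
      = -nodeWeight (-η) ξ (-ζ) (-ζ') n * (ξ n ^ 2) ^ m := by
  have h := eval_differencePoly_add (-η) ξ (-ζ) (-ζ') m n
  rw [differencePoly_neg, eval_neg, neg_div, ← sub_eq_add_neg] at h
  rw [neg_mul, ← h, neg_neg]

lemma Atil_mul_add_Atil_neg_mul (m : ℕ) {x : ℂ} (hx : x ≠ 0) :
    Atil N η ξ ζ ζ' x * (x + η / 2) ^ (2 * m) + Atil N η ξ ζ ζ' (-x) * (x - η / 2) ^ (2 * m)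
      = 2 * (-1) ^ N * (differencePoly η ξ ζ ζ' m).eval (x ^ 2) := by
  have hodd := eval_sub_eval_neg (bulkPoly η ξ ζ ζ' * (X + C (-(η / 2))) ^ (2 * m)) x
  have hpow : (-x + -(η / 2)) ^ (2 * m) = (x + η / 2) ^ (2 * m) := by
    rw [← neg_add, (even_two_mul m).neg_pow]
  simp only [eval_mul, eval_pow, eval_add, eval_X, eval_C, hpow] at hodd
  have hAtil := Atil_neg η ξ ζ ζ' (-x)
  rw [neg_neg] at hAtil
  rw [hAtil, Atil_neg, differencePoly]
  field_simp
  linear_combination hodd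

lemma Afun_Atil {M : ℕ} {x : Fin M → ℂ} (hx : ∀ i, x i ≠ 0) :
    Afun η x (Atil N η ξ ζ ζ')
      = 2 ^ M * (-1) ^ (M * N)
        * (Matrix.of fun i m : Fin M => (differencePoly η ξ ζ ζ' m).eval (x i ^ 2)).det
        / Vhat x := by
  have hnum : (Matrix.of fun i j : Fin M =>
        Atil N η ξ ζ ζ' (x i) * (x i + η / 2) ^ (2 * (j : ℕ))
          + Atil N η ξ ζ ζ' (-x i) * (x i - η / 2) ^ (2 * (j : ℕ)))
      = (2 * (-1 : ℂ) ^ N) • Matrix.of fun i m : Fin M =>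
          (differencePoly η ξ ζ ζ' m).eval (x i ^ 2) := by
    ext i j
    exact Atil_mul_add_Atil_neg_mul η ξ ζ ζ' j (hx i)
  rw [Afun, hnum, Matrix.det_smul, Fintype.card_fin, mul_pow, ← pow_mul, mul_comm N,
    ← det_vandermonde_sq]
  simp only [Matrix.vandermonde, pow_mul]

end DifferenceOperator

section Nodes

open Polynomial

variable {N : ℕ} {η : ℂ} {ξ : Fin N → ℂ} {ζp ζm : ℂ}

lemma fC_mul_gC (n : Fin N) (hη : η ≠ 0) :
    fC N η ξ n * gC N ζp ζm ξ n
      = nodeWeight η ξ ζp ζm n / nodeWeight (-η) ξ (-ζp) (-ζm) n := by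
  simp only [fC, gC, nodeWeight, prod_div_distrib, ← sub_eq_add_neg, neg_mul]
  rw [div_neg, mul_assoc η, mul_assoc η, mul_div_mul_left _ _ hη, div_mul_div_comm]
  exact congrArg₂ (fun a b => -(a / b)) (mul_comm _ _) (mul_comm _ _)

/-- The linear functional `q ↦ q(ξ_n^{(0)}) + f_n g_n q(ξ_n^{(1)})` giving the `n`-th row of the
matrix, where polynomials are in the variable `λ²`. -/
noncomputable def nodeFunctional (η : ℂ) (ξ : Fin N → ℂ) (ζp ζm : ℂ) (n : Fin N) :
    ℂ[X] →ₗ[ℂ] ℂ :=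
  leval ((ξ n + η / 2) ^ 2) + (fC N η ξ n * gC N ζp ζm ξ n) • leval ((ξ n - η / 2) ^ 2)

lemma nodeFunctional_apply (n : Fin N) (q : ℂ[X]) :
    nodeFunctional η ξ ζp ζm n q = q.eval ((ξ n + η / 2) ^ 2)
      + fC N η ξ n * gC N ζp ζm ξ n * q.eval ((ξ n - η / 2) ^ 2) := rfl

lemma nodeFunctional_differencePoly (hη : η ≠ 0) (n : Fin N)
    (hW : nodeWeight (-η) ξ (-ζp) (-ζm) n ≠ 0) (m : ℕ) :
    nodeFunctional η ξ ζp ζm n (differencePoly η ξ ζp ζm m) = 0 := by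
  rw [nodeFunctional_apply, eval_differencePoly_add, eval_differencePoly_sub, fC_mul_gC n hη]
  field_simp
  ring

lemma det_nodeFunctional_prod_mul {M : ℕ} (hη : η ≠ 0)
    (hW : ∀ n, nodeWeight (-η) ξ (-ζp) (-ζm) n ≠ 0) (x : Fin M → ℂ) :
    Vhat x
        * (Matrix.of fun i j : Fin N =>
            nodeFunctional η ξ ζp ζm i ((∏ k, (X - C (x k ^ 2))) * X ^ (j : ℕ))).det
        * (η ^ M * (ascPochhammer ℂ M).eval ((ζp + ζm) / η + N - M))
      = (-1) ^ (M * N)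
        * (Matrix.of fun i m : Fin M => (differencePoly η ξ ζp ζm m).eval (x i ^ 2)).det
        * (Matrix.of fun i j : Fin N => nodeFunctional η ξ ζp ζm i (X ^ (j : ℕ))).det := by
  set P : ℂ[X] := ∏ k, (X - C (x k ^ 2)) with hP
  have hPmonic : P.Monic := monic_prod_X_sub_C _ _
  have hPdeg : P.natDegree = M := by
    rw [hP, natDegree_prod_of_monic _ _ fun k _ => monic_X_sub_C _]
    simp only [natDegree_X_sub_C, sum_const, card_univ, Fintype.card_fin, smul_eq_mul, mul_one]
  have hProot (i : Fin M) : P.eval (x i ^ 2) = 0 := by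
    rw [hP, eval_prod]
    exact prod_eq_zero (mem_univ i) (by simp)
  have hcoeff (j : Fin N) : (P * X ^ (j : ℕ)).coeff (M + j) = 1 := by
    rw [coeff_mul_X_pow, ← hPdeg, hPmonic.coeff_natDegree]
  have h := det_mul_det_of_annihilating
    (fun i => leval (x i ^ 2)) (nodeFunctional η ξ ζp ζm) (fun j : Fin N => P * X ^ (j : ℕ))
    (fun j => by rw [hPmonic.natDegree_mul (monic_X_pow _), hPdeg, natDegree_X_pow])
    (fun i j => by simp [hProot])
    (fun m => differencePoly η ξ ζp ζm m)
    (fun m => natDegree_differencePoly_le η ξ ζp ζm m)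
    (fun i m => nodeFunctional_differencePoly hη i (hW i) m)
  simp only [hcoeff, prod_const_one, mul_one, prod_coeff_differencePoly _ _ _ _ hη, leval_apply,
    eval_pow, eval_X] at h
  rw [← det_vandermonde_sq]
  exact h

lemma det_nodeFunctional_prod_lower_nodes :
    (Matrix.of fun i j : Fin N => nodeFunctional η ξ ζp ζm i
        ((∏ k, (X - C ((ξ k - η / 2) ^ 2))) * X ^ (j : ℕ))).det
      = (2 * η) ^ N * (∏ i, ξ i)
        * (∏ i, ∏ k ∈ univ.erase i, ((ξ i - ξ k + η) * (ξ i + ξ k)))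
        * Vhat fun n => ξ n + η / 2 := by
  have hfactor (i k : Fin N) : (ξ i + η / 2) ^ 2 - (ξ k - η / 2) ^ 2
      = (ξ i - ξ k + η) * (ξ i + ξ k) := by ring
  have hrow (i : Fin N) (j : ℕ) : nodeFunctional η ξ ζp ζm i
        ((∏ k, (X - C ((ξ k - η / 2) ^ 2))) * X ^ j)
      = (2 * η * ξ i * ∏ k ∈ univ.erase i, ((ξ i - ξ k + η) * (ξ i + ξ k)))
        * ((ξ i + η / 2) ^ 2) ^ j := by
    have hroot : ∏ k, ((ξ i - η / 2) ^ 2 - (ξ k - η / 2) ^ 2) = 0 :=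
      prod_eq_zero (mem_univ i) (sub_self _)
    simp only [nodeFunctional_apply, eval_mul, eval_prod, eval_sub, eval_X, eval_C, eval_pow,
      hroot, hfactor]
    rw [← mul_prod_erase _ _ (mem_univ i)]
    ring
  simp only [hrow]
  rw [← det_vandermonde_sq, ← Fin.prod_const, ← prod_mul_distrib, ← prod_mul_distrib]
  exact Matrix.det_mul_column _ _

lemma det_differencePoly_lower_nodes :
    (Matrix.of fun i m : Fin N =>
        (differencePoly η ξ ζp ζm m).eval ((ξ i - η / 2) ^ 2)).det
      = η ^ N * (∏ n, ((ξ n - ζp) * (ξ n - ζm)))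
        * (∏ i, ∏ k ∈ univ.erase i, ((ξ i - ξ k - η) * (ξ i + ξ k - η))) * Vhat ξ := by
  simp only [eval_differencePoly_sub]
  rw [← det_vandermonde_sq, ← Fin.prod_const, ← prod_mul_distrib, ← prod_mul_distrib]
  simp only [nodeWeight, neg_mul, neg_neg, ← sub_eq_add_neg]
  exact Matrix.det_mul_column _ _

lemma prod_div_mul_sub (ξ : Fin N → ℂ) (ζp ζm : ℂ) :
    ∏ n, ξ n / ((ξ n - ζm) * (ζp - ξ n))
      = (∏ n, ξ n) / ((-1) ^ N * ∏ n, ((ξ n - ζp) * (ξ n - ζm))) := by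
  rw [← Fin.prod_const, ← prod_mul_distrib, ← prod_div_distrib]
  exact prod_congr rfl fun n _ => by ring

lemma injective_sub_half_sq (hsq : Function.Injective fun n => ξ n ^ 2)
    (hη_gen : ∀ i j, i ≠ j → ξ i - ξ j ≠ η ∧ ξ i + ξ j ≠ η) :
    Function.Injective fun n => (ξ n - η / 2) ^ 2 := by
  intro i j hij
  by_contra hne
  have hmul : (ξ i - ξ j) * (ξ i + ξ j - η) = 0 := by linear_combination hij
  rcases mul_eq_zero.mp hmul with h | h
  · exact hne (hsq (by simp only [sub_eq_zero.mp h]))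
  · exact (hη_gen i j hne).2 (sub_eq_zero.mp h)

lemma prod_sub_mul_ne_zero (hη_gen : ∀ i j, i ≠ j → ξ i - ξ j ≠ η ∧ ξ i + ξ j ≠ η) (n : Fin N) :
    ∏ a ∈ univ.erase n, ((ξ n - ξ a - η) * (ξ n + ξ a - η)) ≠ 0 := by
  refine prod_ne_zero_iff.mpr fun a ha => ?_
  obtain ⟨hsub, hadd⟩ := hη_gen n a (ne_of_mem_erase ha).symm
  exact mul_ne_zero (sub_ne_zero.mpr hsub) (sub_ne_zero.mpr hadd)

lemma sub_mul_sub_ne_zero (hζ : ∀ n, ξ n ≠ ζp ∧ ξ n ≠ ζm) (n : Fin N) :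
    (ξ n - ζp) * (ξ n - ζm) ≠ 0 :=
  mul_ne_zero (sub_ne_zero.mpr (hζ n).1) (sub_ne_zero.mpr (hζ n).2)

lemma nodeWeight_neg_ne_zero (hη : η ≠ 0)
    (hη_gen : ∀ i j, i ≠ j → ξ i - ξ j ≠ η ∧ ξ i + ξ j ≠ η)
    (hζ : ∀ n, ξ n ≠ ζp ∧ ξ n ≠ ζm) (n : Fin N) :
    nodeWeight (-η) ξ (-ζp) (-ζm) n ≠ 0 := by
  simp only [nodeWeight, ← sub_eq_add_neg]
  exact mul_ne_zero (mul_ne_zero (neg_ne_zero.mpr hη) (sub_mul_sub_ne_zero hζ n))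
    (prod_sub_mul_ne_zero hη_gen n)

lemma det_nodeFunctional_X_pow (hη : η ≠ 0) (hsq : Function.Injective fun n => ξ n ^ 2)
    (hη_gen : ∀ i j, i ≠ j → ξ i - ξ j ≠ η ∧ ξ i + ξ j ≠ η)
    (hζ : ∀ n, ξ n ≠ ζp ∧ ξ n ≠ ζm) :
    (Matrix.of fun i j : Fin N => nodeFunctional η ξ ζp ζm i (X ^ (j : ℕ))).det
      = Vhat ξ * (Vhat (fun n => ξ n + η / 2) / Vhat (fun n => ξ n - η / 2))
        * (∏ n, ξ n / ((ξ n - ζm) * (ζp - ξ n))) * (2 * η) ^ N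
        * (ascPochhammer ℂ N).eval ((ζp + ζm) / η) := by
  have hV := Vhat_ne_zero hsq
  have hV₁ := Vhat_ne_zero (injective_sub_half_sq hsq hη_gen)
  have hZ : ∏ n, ((ξ n - ζp) * (ξ n - ζm)) ≠ 0 :=
    prod_ne_zero_iff.mpr fun n _ => sub_mul_sub_ne_zero hζ n
  have hA : ∏ i, ∏ k ∈ univ.erase i, ((ξ i - ξ k - η) * (ξ i + ξ k - η)) ≠ 0 :=
    prod_ne_zero_iff.mpr fun i _ => prod_sub_mul_ne_zero hη_gen i
  have hsign : (-1 : ℂ) ^ (N * N) = (-1) ^ N :=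
    neg_one_pow_congr (by rw [Nat.even_mul, or_self])
  have hpair := Vhat_sub_sq_mul_prod η ξ
  have hdet := det_nodeFunctional_prod_mul hη (nodeWeight_neg_ne_zero hη hη_gen hζ)
    fun n => ξ n - η / 2
  rw [det_nodeFunctional_prod_lower_nodes, det_differencePoly_lower_nodes, add_sub_cancel_right,
    hsign] at hdet
  refine mul_left_cancel₀ (mul_ne_zero (pow_ne_zero N (neg_ne_zero.mpr one_ne_zero))
    (mul_ne_zero (mul_ne_zero (mul_ne_zero (pow_ne_zero N hη) hZ) hA) hV)) ?_
  rw [← hdet, prod_div_mul_sub]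
  generalize Vhat (fun n => ξ n - η / 2) = V₁, Vhat (fun n => ξ n + η / 2) = V₀ at *
  field_simp
  linear_combination V₀ * (∏ i, ξ i) * (ascPochhammer ℂ N).eval ((ζp + ζm) / η) * hpair

lemma nodeFunctional_prod_mul_X_pow {M : ℕ} (x : Fin M → ℂ) (n : Fin N) (j : ℕ) :
    nodeFunctional η ξ ζp ζm n ((∏ k, (X - C (x k ^ 2))) * X ^ j)
      = (∏ k, ((ξ n + η / 2) ^ 2 - x k ^ 2)) * (ξ n + η / 2) ^ (2 * j)
        + fC N η ξ n * gC N ζp ζm ξ n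
          * (∏ k, ((ξ n - η / 2) ^ 2 - x k ^ 2)) * (ξ n - η / 2) ^ (2 * j) := by
  simp only [nodeFunctional_apply, eval_mul, eval_prod, eval_sub, eval_pow, eval_X, eval_C,
    pow_mul, mul_assoc]

lemma det_nodeFunctional_prod_mul_eq_mul_Afun {M : ℕ} {x : Fin M → ℂ} (hη : η ≠ 0)
    (hη_gen : ∀ i j, i ≠ j → ξ i - ξ j ≠ η ∧ ξ i + ξ j ≠ η)
    (hζ : ∀ n, ξ n ≠ ζp ∧ ξ n ≠ ζm) (hx : ∀ i, x i ≠ 0)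
    (hxsq : Function.Injective fun i => x i ^ 2)
    (hs : ∀ m : ℕ, (ζp + ζm) / η + N - M ≠ -m) :
    (Matrix.of fun i j : Fin N =>
        nodeFunctional η ξ ζp ζm i ((∏ k, (X - C (x k ^ 2))) * X ^ (j : ℕ))).det
      = (Matrix.of fun i j : Fin N => nodeFunctional η ξ ζp ζm i (X ^ (j : ℕ))).det
        / ((2 * η) ^ M * (ascPochhammer ℂ M).eval ((ζp + ζm) / η + N - M))
        * Afun η x (Atil N η ξ ζp ζm) := by
  have hV := Vhat_ne_zero hxsq
  have hP := ascPochhammer_eval_ne_zero hs M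
  have hdet := det_nodeFunctional_prod_mul hη (nodeWeight_neg_ne_zero hη hη_gen hζ) x
  rw [Afun_Atil η ξ ζp ζm hx]
  generalize (ascPochhammer ℂ M).eval ((ζp + ζm) / η + N - M) = c at *
  field_simp
  linear_combination 2 ^ M * hdet

end Nodes

section Genericity

variable {N : ℕ} {η : ℂ} {ξ : Fin N → ℂ}

lemma GenG.injective_sq (h : GenG N η ξ) : Function.Injective fun n => ξ n ^ 2 := by
  intro i j hij
  by_contra hne
  obtain ⟨hadd, -, -, hsub, -, -⟩ := h.2 i j hne
  exact mul_ne_zero hadd hsub (by linear_combination hij)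

lemma GenG.sub_ne_and_add_ne (h : GenG N η ξ) (i j : Fin N) (hne : i ≠ j) :
    ξ i - ξ j ≠ η ∧ ξ i + ξ j ≠ η := by
  obtain ⟨-, hadd, -, -, hsub, -⟩ := h.2 i j hne
  exact ⟨hsub, hadd⟩

end Genericity

theorem stmt4_general {N M : ℕ} {η : ℂ} (hη : η ≠ 0) {ξ : Fin N → ℂ}
    (hsq : Function.Injective fun n => ξ n ^ 2)
    (hη_gen : ∀ i j, i ≠ j → ξ i - ξ j ≠ η ∧ ξ i + ξ j ≠ η)
    {ζp ζm : ℂ} (hζ : ∀ n, ξ n ≠ ζp ∧ ξ n ≠ ζm) {x : Fin M → ℂ}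
    (hs : ∀ m : ℕ, (ζp + ζm) / η ≠ -(m : ℂ))
    (hs' : ∀ m : ℕ, (ζp + ζm) / η + (N : ℂ) - (M : ℂ) ≠ -(m : ℂ))
    (hx : ∀ i, x i ≠ 0) (hxsq : Function.Injective fun i => x i ^ 2) :
    Matrix.det (Matrix.of fun i j : Fin N =>
        (∏ k, ((ξ i + η / 2) ^ 2 - x k ^ 2)) * (ξ i + η / 2) ^ (2 * (j : ℕ))
          + fC N η ξ i * gC N ζp ζm ξ i
            * (∏ k, ((ξ i - η / 2) ^ 2 - x k ^ 2)) * (ξ i - η / 2) ^ (2 * (j : ℕ)))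
    = Vhat ξ * (Vhat (fun n => ξ n + η / 2) / Vhat (fun n => ξ n - η / 2))
        * (∏ n, ξ n / ((ξ n - ζm) * (ζp - ξ n)))
        * (2 * η) ^ ((N : ℤ) - (M : ℤ))
        * (Complex.Gamma ((ζp + ζm) / η + (N : ℂ) - (M : ℂ))
            / Complex.Gamma ((ζp + ζm) / η))
        * Afun η x (Atil N η ξ ζp ζm) := by
  simp only [← nodeFunctional_prod_mul_X_pow]
  rw [det_nodeFunctional_prod_mul_eq_mul_Afun hη hη_gen hζ hx hxsq hs',
    det_nodeFunctional_X_pow hη hsq hη_gen hζ, Gamma_add_sub_div_Gamma N M hs hs',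
    zpow_sub₀ (mul_ne_zero two_ne_zero hη), zpow_natCast, zpow_natCast]
  ring

theorem stmt4 (N : ℕ) (hN : 1 ≤ N) (η : ℂ) (hη : η ≠ 0)
    (ξ : Fin N → ℂ) (hG : GenG N η ξ)
    (ζp ζm : ℂ) (hζ : ∀ n, ξ n ≠ ζp ∧ ξ n ≠ ζm)
    (nα nβ : ℕ) (αR : Fin nα → ℂ) (βR : Fin nβ → ℂ)
    (hs : ∀ m : ℕ, (ζp + ζm) / η ≠ -(m : ℂ))
    (hs' : ∀ m : ℕ,
      (ζp + ζm) / η + (N : ℂ) - (nα : ℂ) - (nβ : ℂ) ≠ -(m : ℂ))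
    (hne : ∀ i, Fin.append αR βR i ≠ 0)
    (hdist : ∀ i j, i ≠ j → (Fin.append αR βR i) ^ 2 ≠ (Fin.append αR βR j) ^ 2)
    (hnξ : ∀ i n, (Fin.append αR βR i) ^ 2 ≠ (ξ n + η / 2) ^ 2 ∧
                  (Fin.append αR βR i) ^ 2 ≠ (ξ n - η / 2) ^ 2)
    (α β : ℂ → ℂ)
    (hα : α = fun lam => ∏ k, (lam ^ 2 - αR k ^ 2))
    (hβ : β = fun lam => ∏ k, (lam ^ 2 - βR k ^ 2)) :
    Matrix.det (Matrix.of fun i j : Fin N =>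
        α (ξ i + η / 2) * β (ξ i + η / 2) * (ξ i + η / 2) ^ (2 * (j : ℕ))
          + fC N η ξ i * gC N ζp ζm ξ i
            * α (ξ i - η / 2) * β (ξ i - η / 2) * (ξ i - η / 2) ^ (2 * (j : ℕ)))
    = Vhat ξ * (Vhat (fun n => ξ n + η / 2) / Vhat (fun n => ξ n - η / 2))
        * (∏ n, ξ n / ((ξ n - ζm) * (ζp - ξ n)))
        * (2 * η) ^ ((N : ℤ) - (nα : ℤ) - (nβ : ℤ))
        * (Complex.Gamma ((ζp + ζm) / η + (N : ℂ) - (nα : ℂ) - (nβ : ℂ))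
            / Complex.Gamma ((ζp + ζm) / η))
        * Afun η (Fin.append αR βR) (Atil N η ξ ζp ζm) := by
  subst hα hβ
  simpa only [Fin.prod_univ_add, Fin.append_left, Fin.append_right, Nat.cast_add, ← sub_sub,
    mul_assoc] using stmt4_general hη hG.injective_sq hG.sub_ne_and_add_ne hζ hs
      (by simpa only [Nat.cast_add, sub_sub] using hs') hne
      (fun i j => not_imp_not.mp (hdist i j))
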